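/- Every finite acyclic graph (forest) F is z-monotonic: for every induced subgraph H1 of F and every induced subgraph H2 of H1, z(H2) ≤ z(H1). In particular, for every induced subgraph H of F one has z(H) ≤ z(F). -/

import Mathlib

open SimpleGraph

universe u v

/-- `c` is a z-coloring of `G` using exactly the `k` colors `0, …, k-1`:
it is proper, every color class is nonempty, every vertex of color `j` has a
neighbor of each color `i < j` (Grundy property), and there are vertices
`u 0, …, u (k-1)` with `u j` of color `j`, such that `u (k-1)` is adjacent to
every other `u j`, and each `u j` has a neighbor of every color `i ≠ j`. -/
def IsZColoring {V : Type u} (G : SimpleGraph V) (k : ℕ) (c : V → ℕ) : Prop :=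
  (∀ v, c v < k) ∧
  (∀ ⦃x y : V⦄, G.Adj x y → c x ≠ c y) ∧
  (∀ i, i < k → ∃ v, c v = i) ∧
  (∀ v : V, ∀ i, i < c v → ∃ w, G.Adj v w ∧ c w = i) ∧
  (∃ u : ℕ → V,
    (∀ j, j < k → c (u j) = j) ∧
    (∀ j, j < k - 1 → G.Adj (u (k - 1)) (u j)) ∧
    (∀ i, i < k → ∀ j, j < k → i ≠ j → ∃ w, G.Adj (u j) w ∧ c w = i))

/-- The z-chromatic number: the maximum number of colors in a z-coloring. -/
noncomputable def zNum {V : Type u} (G : SimpleGraph V) : ℕ :=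
  sSup {k | ∃ c : V → ℕ, IsZColoring G k c}

/-- `c` is a Grundy coloring of `G` using exactly the `k` colors `0, …, k-1`. -/
def IsGrundyColoring {V : Type u} (G : SimpleGraph V) (k : ℕ) (c : V → ℕ) : Prop :=
  (∀ v, c v < k) ∧
  (∀ ⦃x y : V⦄, G.Adj x y → c x ≠ c y) ∧
  (∀ i, i < k → ∃ v, c v = i) ∧
  (∀ v : V, ∀ i, i < c v → ∃ w, G.Adj v w ∧ c w = i)

/-- The Grundy number: the maximum number of colors in a Grundy coloring. -/
noncomputable def grundyNum {V : Type u} (G : SimpleGraph V) : ℕ :=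
  sSup {k | ∃ c : V → ℕ, IsGrundyColoring G k c}

/-- `c` is a b-coloring of `G` using exactly the `k` colors `0, …, k-1`:
proper, and every color class contains a vertex adjacent to a vertex of every
other color class. -/
def IsBColoring {V : Type u} (G : SimpleGraph V) (k : ℕ) (c : V → ℕ) : Prop :=
  (∀ v, c v < k) ∧
  (∀ ⦃x y : V⦄, G.Adj x y → c x ≠ c y) ∧
  (∀ i, i < k → ∃ v, c v = i ∧ ∀ j, j < k → j ≠ i → ∃ w, G.Adj v w ∧ c w = j)

/-- The b-chromatic number: the maximum number of colors in a b-coloring. -/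
noncomputable def bNum {V : Type u} (G : SimpleGraph V) : ℕ :=
  sSup {k | ∃ c : V → ℕ, IsBColoring G k c}

/-- The chromatic number, as a natural number. -/
noncomputable def chromNum {V : Type u} (G : SimpleGraph V) : ℕ :=
  sInf {k | G.Colorable k}

/-- The maximum degree of a graph (degree measured by `Set.ncard` of the
neighbor set), as the supremum of all achieved degrees. -/
noncomputable def maxDeg {V : Type u} (G : SimpleGraph V) : ℕ :=
  sSup {d | ∃ v : V, (G.neighborSet v).ncard = d}

/-
A z-coloring of a subgraph restricts to the component of its dominating vertex `u (k - 1)`, because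
that component contains all the witnesses. So let `H` be a connected subgraph of a forest `G`, with
a Grundy coloring in at least two colors. After the edges of `H` are deleted, each component of what
is left of `G` meets `H` at most once, since two meetings would close a cycle. Hence each of these
components has a proper `0`-`1` coloring in which its vertex of `H`, if any, is `0` exactly when its
given color is `0`. Keeping the given colors on `H` and using these `0`-`1` colorings elsewhere
yields a Grundy coloring of `G`, for which the old witnesses still serve.

For a z-coloring in a single color there is nothing to do unless `G` has an edge, and then that edge
is a subgraph with a z-coloring in two colors.
-/

section

variable {U : Type u} {V : Type v} {H : SimpleGraph U} {G K L : SimpleGraph V} {k : ℕ}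

lemma eq_of_reachable_of_isIsolated {x y : V} (hx : G.IsIsolated x) (hxy : G.Reachable x y) :
    x = y := by
  obtain ⟨_ | ⟨hadj, _⟩⟩ := hxy
  · rfl
  · exact (hx _ hadj).elim

lemma eq_of_reachable_of_disjoint (hG : G.IsAcyclic) (hK : K ≤ G) (hL : L ≤ G)
    (hKL : Disjoint K L) {x y : V} (hKxy : K.Reachable x y) (hLxy : L.Reachable x y) : x = y := by
  obtain ⟨p, hp⟩ := hKxy.exists_isPath
  obtain ⟨q, hq⟩ := hLxy.exists_isPath
  have hedges : p.edges = q.edges := by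
    have hpath := (hG.subsingleton_path x y).elim ⟨p.mapLe hK, hp.mapLe hK⟩
      ⟨q.mapLe hL, hq.mapLe hL⟩
    simpa using congrArg (fun r : G.Path x y => r.1.edges) hpath
  cases p with
  | nil => rfl
  | cons hadj p =>
    rw [Walk.edges_cons] at hedges
    have hadj' := q.adj_of_mem_edges (hedges ▸ List.mem_cons_self)
    exact (disjoint_left.mp hKL _ _ hadj hadj').elim

lemma injOn_connectedComponentMk_sdiff_map (hG : G.IsAcyclic) (hH : H.Preconnected)
    (f : Copy H G) :
    (Set.range f ∪ {x | (G \ H.map f).IsIsolated x}).InjOn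
      (G \ H.map f).connectedComponentMk := by
  have hle : H.map f ≤ G :=
    (map_le_iff_le_comap f.toEmbedding H G).mpr fun _ _ hadj => f.toHom.map_adj hadj
  intro x hx y hy hxy
  have hreach := ConnectedComponent.exact hxy
  rcases hx with ⟨a, rfl⟩ | hx
  · rcases hy with ⟨b, rfl⟩ | hy
    · have hab := (hH a b).map (Embedding.map f.toEmbedding H).toHom
      exact eq_of_reachable_of_disjoint hG hle sdiff_le disjoint_sdiff_self_right hab hreach
    · exact (eq_of_reachable_of_isIsolated hy hreach.symm).symm
  · exact eq_of_reachable_of_isIsolated hx hreach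

lemma exists_coloring_bool_eqOn (hG : G.IsBipartite) {S : Set V}
    (hS : S.InjOn G.connectedComponentMk) (p : V → Bool) :
    ∃ b : G.Coloring Bool, S.EqOn b p := by
  let b₀ : G.Coloring Bool := hG.toColoring (by simp)
  let swap : G.ConnectedComponent → Bool :=
    Function.extend (S.domRestrict G.connectedComponentMk) (fun s => b₀ s ^^ p s) fun _ => false
  refine ⟨Coloring.mk (fun x => b₀ x ^^ swap (G.connectedComponentMk x)) ?_, ?_⟩
  · intro x y hadj
    rw [ConnectedComponent.connectedComponentMk_eq_of_adj hadj]
    simpa using b₀.valid hadj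
  · intro x hx
    have hswap : swap (G.connectedComponentMk x) = (b₀ x ^^ p x) :=
      hS.injective.extend_apply _ _ ⟨x, hx⟩
    change (b₀ x ^^ swap (G.connectedComponentMk x)) = p x
    simp [hswap]

lemma exists_extension_alternating (hH : H.Preconnected) (hG : G.IsAcyclic) (f : Copy H G)
    (c : U → ℕ) :
    ∃ c' : V → ℕ, c' ∘ f = c ∧
      (∀ x y, (G \ H.map f).Adj x y → (c' x = 0 ↔ c' y ≠ 0)) ∧
      ∀ x ∉ Set.range f, c' x = 0 ∨ c' x = 1 ∧ ∃ y, (G \ H.map f).Adj x y := by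
  let c₀ : V → ℕ := Function.extend f c 0
  have hc₀ (a : U) : c₀ (f a) = c a := f.injective.extend_apply c 0 a
  have hc₀_off {x : V} (hx : x ∉ Set.range f) : c₀ x = 0 := Function.extend_apply' _ _ x hx
  -- Prescribing `b` at isolated vertices too keeps them at `0`: they have no neighbor that could
  -- justify the color `1`.
  obtain ⟨b, hb⟩ := exists_coloring_bool_eqOn (hG.anti sdiff_le).isBipartite
    (injOn_connectedComponentMk_sdiff_map hG hH f) fun x => decide (c₀ x ≠ 0)
  have hb_apply (a : U) : b (f a) = decide (c a ≠ 0) := by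
    simpa [hc₀] using hb (.inl ⟨a, rfl⟩)
  -- This is `c` on the copy and `b`, read as `0` or `1`, elsewhere. It vanishes exactly where `b`
  -- is `false`, so it alternates along the edges outside the copy.
  refine ⟨fun x => if b x then max (c₀ x) 1 else 0, funext fun a => ?_, fun x y hxy => ?_,
    fun x hx => ?_⟩
  · grind
  · have hne : b x ≠ b y := b.valid hxy
    grind
  · have hb_isolated (hiso : (G \ H.map f).IsIsolated x) : b x = false := by
      simpa [hc₀_off hx] using hb (.inr hiso)
    by_cases hbx : b x
    · exact .inr ⟨by simp [hbx, hc₀_off hx], exists_adj_iff_not_isIsolated.mpr (by grind)⟩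
    · exact .inl (by simp [hbx])

lemma IsGrundyColoring.exists_extension {c : U → ℕ} (hc : IsGrundyColoring H k c) (hk : 2 ≤ k)
    (hH : H.Preconnected) (hG : G.IsAcyclic) (f : Copy H G) :
    ∃ c' : V → ℕ, IsGrundyColoring G k c' ∧ c' ∘ f = c := by
  obtain ⟨hlt, hproper, hsurj, hgrundy⟩ := hc
  obtain ⟨c', hext, halternate, hoff⟩ := exists_extension_alternating hH hG f c
  have hc' (a : U) : c' (f a) = c a := congrFun hext a
  refine ⟨c', ⟨fun x => ?_, fun x y hadj => ?_, fun i hi => ?_, fun x i hi => ?_⟩, hext⟩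
  · by_cases hx : x ∈ Set.range f
    · obtain ⟨a, rfl⟩ := hx
      exact hc' a ▸ hlt a
    · have := hoff x hx
      omega
  · by_cases hmap : (H.map f).Adj x y
    · obtain ⟨-, a, a', haa', rfl, rfl⟩ := hmap
      simpa [hc'] using hproper haa'
    · have := halternate x y ⟨hadj, hmap⟩
      omega
  · obtain ⟨a, ha⟩ := hsurj i hi
    exact ⟨f a, (hc' a).trans ha⟩
  · by_cases hx : x ∈ Set.range f
    · obtain ⟨a, rfl⟩ := hx
      obtain ⟨w, haw, hw⟩ := hgrundy a i (hc' a ▸ hi)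
      exact ⟨f w, f.toHom.map_adj haw, (hc' w).trans hw⟩
    · obtain hx₀ | ⟨hx₁, y, hxy⟩ := hoff x hx
      · omega
      · have := halternate x y hxy
        exact ⟨y, hxy.1, by omega⟩

lemma IsGrundyColoring.le_card [Finite V] {c : V → ℕ} (hc : IsGrundyColoring G k c) :
    k ≤ Nat.card V := by
  obtain ⟨-, -, hsurj, -⟩ := hc
  choose x hx using hsurj
  have hinj : Function.Injective fun i : Fin k => x i i.isLt := fun i j hij => by
    simpa [hx, Fin.ext_iff] using congrArg c hij
  simpa using Nat.card_le_card_of_injective _ hinj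

lemma IsZColoring.isGrundyColoring {c : V → ℕ} (hc : IsZColoring G k c) :
    IsGrundyColoring G k c :=
  ⟨hc.1, hc.2.1, hc.2.2.1, hc.2.2.2.1⟩

lemma IsGrundyColoring.isZColoring_of_comp_hom {c : V → ℕ} (hc : IsGrundyColoring G k c)
    (f : H →g G) (hcf : IsZColoring H k (c ∘ f)) : IsZColoring G k c := by
  obtain ⟨-, -, -, -, u, hu, hadj, hdom⟩ := hcf
  obtain ⟨hlt, hproper, hsurj, hgrundy⟩ := hc
  refine ⟨hlt, hproper, hsurj, hgrundy, f ∘ u, hu, fun j hj => f.map_adj (hadj j hj),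
    fun i hi j hj hij => ?_⟩
  obtain ⟨w, hw, hcw⟩ := hdom i hi j hj hij
  exact ⟨f w, f.map_adj hw, hcw⟩

lemma IsZColoring.exists_connectedComponent {c : V → ℕ} (hc : IsZColoring G k c) :
    ∃ C : G.ConnectedComponent, IsZColoring C.toSimpleGraph k (c ∘ C.toSimpleGraph_hom) := by
  obtain ⟨hlt, hproper, -, hgrundy, u, hu, hadj, hdom⟩ := hc
  let C := G.connectedComponentMk (u (k - 1))
  have hclosed {x y : V} (hx : x ∈ C.supp) (hxy : G.Adj x y) : y ∈ C.supp :=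
    C.mem_supp_of_adj_mem_supp hx hxy
  have huC {j : ℕ} (hj : j < k) : u j ∈ C.supp := by
    obtain hj | rfl : j < k - 1 ∨ j = k - 1 := by omega
    · exact hclosed rfl (hadj j hj)
    · rfl
  let uC : ℕ → C := fun j => if hj : j < k then ⟨u j, huC hj⟩ else ⟨u (k - 1), rfl⟩
  have huC_val {j : ℕ} (hj : j < k) : C.toSimpleGraph_hom (uC j) = u j := by
    simp [uC, hj, ConnectedComponent.toSimpleGraph_hom_apply]
  have hc_uC {j : ℕ} (hj : j < k) : (c ∘ C.toSimpleGraph_hom) (uC j) = j :=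
    (congrArg c (huC_val hj)).trans (hu j hj)
  refine ⟨C, fun x => hlt x, fun x y hxy => hproper hxy, fun i hi => ⟨uC i, hc_uC hi⟩,
    fun x i hi => ?_, uC, fun j hj => hc_uC hj, fun j hj => ?_, fun i hi j hj hij => ?_⟩
  · obtain ⟨w, hxw, hw⟩ := hgrundy x i hi
    exact ⟨⟨w, hclosed x.2 hxw⟩, hxw, hw⟩
  · change G.Adj (C.toSimpleGraph_hom (uC (k - 1))) (C.toSimpleGraph_hom (uC j))
    rw [huC_val (by omega), huC_val (by omega)]
    exact hadj j hj
  · obtain ⟨w, hjw, hw⟩ := hdom i hi j hj hij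
    refine ⟨⟨w, hclosed (huC hj) hjw⟩, ?_, hw⟩
    change G.Adj (C.toSimpleGraph_hom (uC j)) w
    rwa [huC_val hj]

lemma isZColoring_top (n : ℕ) : IsZColoring (⊤ : SimpleGraph (Fin (n + 1))) (n + 1) Fin.val := by
  have hval {j : ℕ} (hj : j < n + 1) : (Fin.ofNat (n + 1) j : ℕ) = j := Nat.mod_eq_of_lt hj
  refine ⟨Fin.isLt, fun i j hij => Fin.val_ne_of_ne hij, fun i hi => ⟨⟨i, hi⟩, rfl⟩,
    fun x i hi => ⟨⟨i, by omega⟩, (Fin.ne_of_lt hi).symm, rfl⟩, Fin.ofNat (n + 1),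
    fun j hj => hval hj, fun j hj => Fin.ne_of_val_ne ?_,
    fun i hi j hj hij => ⟨⟨i, hi⟩, Fin.ne_of_val_ne ?_, rfl⟩⟩
  · rw [hval (by omega), hval (by omega)]
    omega
  · rw [hval hj]
    exact hij.symm

lemma isZColoring_bot [Nonempty V] : IsZColoring (⊥ : SimpleGraph V) 1 fun _ => 0 :=
  ⟨fun _ => one_pos, fun _ _ hadj => hadj.elim, by simp, fun _ _ hi => (Nat.not_lt_zero _ hi).elim,
    fun _ => Classical.arbitrary V, by simp, by simp, by omega⟩

lemma IsZColoring.exists_of_isContained {c : U → ℕ} (hc : IsZColoring H k c) (hk : 2 ≤ k)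
    (hG : G.IsAcyclic) (hHG : H ⊑ G) : ∃ c' : V → ℕ, IsZColoring G k c' := by
  obtain ⟨f⟩ := hHG
  obtain ⟨C, hC⟩ := hc.exists_connectedComponent
  let g : Copy C.toSimpleGraph G := f.comp (Copy.induce H C.supp)
  obtain ⟨c', hc', hext⟩ :=
    hC.isGrundyColoring.exists_extension hk C.connected_toSimpleGraph.preconnected hG g
  exact ⟨c', hc'.isZColoring_of_comp_hom g.toHom (hext ▸ hC)⟩

lemma IsZColoring.exists_le_of_isContained {c : U → ℕ} (hc : IsZColoring H k c)
    (hG : G.IsAcyclic) (hHG : H ⊑ G) : ∃ k' ≥ k, ∃ c' : V → ℕ, IsZColoring G k' c' := by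
  by_cases hk : 2 ≤ k
  · exact ⟨k, le_rfl, hc.exists_of_isContained hk hG hHG⟩
  by_cases hedge : G = ⊥
  · obtain ⟨-, -, -, -, u, -⟩ := hc
    obtain ⟨f⟩ := hHG
    have : Nonempty V := ⟨f (u 0)⟩
    exact ⟨1, by omega, _, hedge ▸ isZColoring_bot⟩
  · have htop : completeGraph (Fin 2) ⊑ G :=
      (not_cliqueFree_iff_top_isContained 2).mp (mt cliqueFree_two.mp hedge)
    exact ⟨2, by omega, (isZColoring_top 1).exists_of_isContained le_rfl hG htop⟩

lemma bddAbove_setOf_isZColoring [Finite V] (G : SimpleGraph V) :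
    BddAbove {k | ∃ c : V → ℕ, IsZColoring G k c} :=
  ⟨Nat.card V, fun _ ⟨_, hc⟩ => hc.isGrundyColoring.le_card⟩

theorem forest_z_monotonic_general (hG : G.IsAcyclic)
    (hb : BddAbove {k | ∃ c : V → ℕ, IsZColoring G k c}) (hHG : H ⊑ G) : zNum H ≤ zNum G :=
  csSup_le' fun _ ⟨_, hc⟩ =>
    let ⟨_, hle, hc'⟩ := hc.exists_le_of_isContained hG hHG
    hle.trans (le_csSup hb hc')

end

/-- every finite forest `F` is z-monotonic: whenever `H₂` is an
induced subgraph of an induced subgraph `H₁` of `F` (i.e. `t ⊆ s` are vertex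
subsets and `Hᵢ` is induced on them), we have `z(H₂) ≤ z(H₁)`; in particular
`z(H) ≤ z(F)` for every induced subgraph `H` of `F`. -/
theorem forest_z_monotonic {V : Type u} [Fintype V] (F : SimpleGraph V)
    (hF : F.IsAcyclic) :
    (∀ s t : Set V, t ⊆ s → zNum (F.induce t) ≤ zNum (F.induce s)) ∧
    (∀ s : Set V, zNum (F.induce s) ≤ zNum F) := by
  refine ⟨fun s t hts => ?_, fun s => ?_⟩
  · exact forest_z_monotonic_general (hF.induce s) (bddAbove_setOf_isZColoring _)
      ⟨(induceHomOfLE F hts).toCopy⟩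
  · exact forest_z_monotonic_general hF (bddAbove_setOf_isZColoring F) ⟨.induce F s⟩
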